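/- (Monotonicity of the reputation update in the internal reputation) Let h(x) = 1 − (19/(10π))·arctan(10x/π). For all x, y, R with 0 ≤ y < x ≤ 1 and 0 ≤ R ≤ 1, one has h(x)·x + (1 − h(x))·R > h(y)·y + (1 − h(y))·R. That is, if two workers have equal prior accumulated reputation R and the influence of consecutive good/bad task counts is ignored, the worker with the strictly larger internal reputation obtains the strictly larger updated accumulated reputation. -/

import Mathlib

open Real

/-- The influence function `h(x) = 1 - (19/(10π))·arctan(10x/π)` of the latest internal
reputation on the attenuation coefficient. -/
noncomputable def h (x : ℝ) : ℝ := -(19 / (10 * π)) * arctan (10 * x / π) + 1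

/-!
Differentiating `(1 - c * arctan (k * x)) * x` gives `1 - c * (arctan u + u / (1 + u ^ 2))` with
`u = k * x`. The bracket stays below `π / 2`: by the double-angle formula, this is `sin θ < θ` at
`θ = π - 2 * arctan u`. Hence `h x * x` is strictly increasing, because `h` has `c = 1.9 / π`,
which is at most `2 / π`. The other summand `(1 - h x) * R` is monotone because `h` decreases
and `R ≥ 0`.
-/

lemma sin_two_mul_arctan (u : ℝ) : sin (2 * arctan u) = 2 * u / (1 + u ^ 2) := by
  rw [sin_eq_two_mul_tan_half_div_one_add_tan_half_sq, mul_div_cancel_left₀ _ two_ne_zero,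
    tan_arctan]

lemma arctan_add_div_one_add_sq_lt_pi_div_two (u : ℝ) :
    arctan u + u / (1 + u ^ 2) < π / 2 := by
  have angle_pos : 0 < π - 2 * arctan u := by linarith [arctan_lt_pi_div_two u]
  have sin_lt_angle : 2 * u / (1 + u ^ 2) < π - 2 * arctan u := by
    simpa only [sin_pi_sub, sin_two_mul_arctan] using sin_lt angle_pos
  rw [mul_div_assoc] at sin_lt_angle
  linarith

lemma hasDerivAt_one_sub_mul_arctan_mul_self (c k x : ℝ) :
    HasDerivAt (fun x ↦ (1 - c * arctan (k * x)) * x)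
      (1 - c * (arctan (k * x) + k * x / (1 + (k * x) ^ 2))) x := by
  have hasDerivAt_arctan : HasDerivAt (fun x ↦ arctan (k * x))
      (1 / (1 + (k * x) ^ 2) * (k * 1)) x :=
    ((hasDerivAt_id x).const_mul k).arctan
  refine (((hasDerivAt_arctan.const_mul c).const_sub 1).mul (hasDerivAt_id x)).congr_deriv ?_
  simp only [id_eq]
  ring

lemma strictMono_one_sub_mul_arctan_mul_self {c : ℝ} (hc₀ : 0 ≤ c) (hc : c ≤ 2 / π) (k : ℝ) :
    StrictMono fun x ↦ (1 - c * arctan (k * x)) * x := by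
  refine strictMono_of_hasDerivAt_pos (hasDerivAt_one_sub_mul_arctan_mul_self c k) fun x ↦ ?_
  rw [sub_pos]
  have bracket_lt := arctan_add_div_one_add_sq_lt_pi_div_two (k * x)
  obtain rfl | c_pos := hc₀.eq_or_lt
  · simp
  · calc
      c * (arctan (k * x) + k * x / (1 + (k * x) ^ 2)) < c * (π / 2) := by gcongr
      _ ≤ 2 / π * (π / 2) := by gcongr
      _ = 1 := by field_simp

lemma strictMono_h_mul_self : StrictMono fun x ↦ h x * x := by
  have coeff_le : 19 / (10 * π) ≤ 2 / π := by
    rw [div_le_div_iff₀ (by positivity) pi_pos]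
    linarith [pi_pos]
  convert strictMono_one_sub_mul_arctan_mul_self (by positivity) coeff_le (10 / π) using 3 with x
  rw [h, mul_div_right_comm]
  ring

lemma antitone_h : Antitone h := by
  intro y x hyx
  simp only [h, neg_mul]
  gcongr

theorem reputation_update_strict_mono_general {R : ℝ} (hR : 0 ≤ R) :
    StrictMono fun x ↦ h x * x + (1 - h x) * R := by
  have monotone_one_sub_h : Monotone fun x ↦ 1 - h x :=
    fun _ _ hyx ↦ sub_le_sub_left (antitone_h hyx) 1
  exact strictMono_h_mul_self.add_monotone (monotone_one_sub_h.mul_const hR)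

/-- **Monotonicity of the reputation update in the internal reputation.**  For all
`x, y, R` with `0 ≤ y < x ≤ 1` and `0 ≤ R ≤ 1`,
`h(x)·x + (1 - h(x))·R > h(y)·y + (1 - h(y))·R`: with equal prior accumulated reputation
`R` (ignoring the consecutive-task factors), a strictly larger internal reputation yields
a strictly larger updated accumulated reputation. -/
theorem reputation_update_strict_mono
    (x y R : ℝ) (hy : 0 ≤ y) (hyx : y < x) (hx : x ≤ 1) (hR0 : 0 ≤ R) (hR1 : R ≤ 1) :
    h y * y + (1 - h y) * R < h x * x + (1 - h x) * R :=
  reputation_update_strict_mono_general hR0 hyx
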